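/- Let D be a division ring that is weakly locally finite and algebraic over its center, and let n ≥ 1. If the group GL_n(D) is finitely generated, then D is commutative (i.e., D is a field). -/

import Mathlib

/-- A division ring is *centrally finite* if it is a finite-dimensional
vector space over its own center. -/
def IsCentrallyFinite (E : Type*) [DivisionRing E] : Prop :=
  Module.Finite (Subring.center E) E

/-- A division ring is *weakly locally finite* if for every finite subset `S`,
the division subring generated by `S` is centrally finite. -/
def IsWeaklyLocallyFinite (D : Type*) [DivisionRing D] : Prop :=
  ∀ S : Finset D, IsCentrallyFinite (Subfield.closure (S : Set D))

/-- A division ring is *algebraic over its center* if every element is a root of a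
nonzero polynomial all of whose coefficients lie in the center. -/
def IsAlgebraicOverCenter (D : Type*) [DivisionRing D] : Prop :=
  ∀ x : D, ∃ p : Polynomial D, p ≠ 0 ∧ (∀ i, p.coeff i ∈ Subring.center D) ∧ p.eval x = 0

theorem aux_int_jacobson : IsJacobsonRing ℤ := by
  rw [isJacobsonRing_iff_prime_eq]
  intro P hP
  by_cases h : P = ⊥
  · subst h
    refine le_antisymm (fun x hx => ?_) Ideal.le_jacobson
    rw [Ideal.mem_jacobson_bot] at hx
    have h1 := hx x
    rw [Ideal.mem_bot]
    rw [Int.isUnit_iff] at h1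
    have h2 : 0 ≤ x * x := mul_self_nonneg x
    have : x * x = 0 := by omega
    exact mul_self_eq_zero.mp this
  · have := IsPrime.to_maximal_ideal h
    exact Ideal.jacobson_eq_self_of_isMaximal

theorem aux_finite_field (F : Type*) [Field F] [Algebra.FiniteType ℤ F] : Finite F := by
  have := aux_int_jacobson
  have hfin : Module.Finite ℤ F := finite_of_finite_type_of_isJacobsonRing ℤ F
  have hint : Algebra.IsIntegral ℤ F := inferInstance
  have hni : ¬ Function.Injective (algebraMap ℤ F) := fun hi =>
    Int.not_isField (isField_of_isIntegral_of_isField hi (Field.toIsField F))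
  rw [injective_iff_map_eq_zero] at hni
  push Not at hni
  obtain ⟨m, hm, hm0⟩ := hni
  refine Module.finite_of_fg_torsion F ?_
  intro x
  refine ⟨⟨m, mem_nonZeroDivisors_of_ne_zero hm0⟩, ?_⟩
  change m • x = 0
  rw [Algebra.smul_def, hm, zero_mul]

theorem aux_comm (E : Type*) [DivisionRing E] (hE : IsCentrallyFinite E)
    (hft : Algebra.FiniteType ℤ E) : ∀ a b : E, a * b = b * a := by
  have hE' : Module.Finite (Subring.center E) E := hE
  obtain ⟨B₀, hB₀, hC⟩ := exists_subalgebra_of_fg ℤ (Subring.center E) E hft.1 hE'.1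
  have : IsNoetherianRing B₀ := isNoetherianRing_of_fg hB₀
  have : Module.Finite B₀ E := ⟨hC⟩
  have hF : (⊤ : Subalgebra ℤ (Subring.center E)).FG :=
    Algebra.fg_trans' (B₀.fg_top.2 hB₀) <|
      Subalgebra.fg_of_submodule_fg <|
        fg_of_injective (IsScalarTower.toAlgHom B₀ (Subring.center E) E).toLinearMap
          Subtype.val_injective
  have : Algebra.FiniteType ℤ (Subring.center E) := ⟨hF⟩
  have : Finite (Subring.center E) := aux_finite_field _
  have : Finite E := Module.finite_of_finite (Subring.center E)
  exact (Finite.isDomain_to_isField E).mul_comm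

/-- If `D` is a weakly locally finite division ring, algebraic over its center, and
`GL_n(D)` is finitely generated for some `n ≥ 1`, then `D` is commutative. -/
theorem commutative_of_GL_fg (D : Type*) [DivisionRing D]
    (hwlf : IsWeaklyLocallyFinite D) (halg : IsAlgebraicOverCenter D)
    (n : ℕ) (hn : 1 ≤ n) (hfg : Group.FG (Matrix (Fin n) (Fin n) D)ˣ) :
    ∀ a b : D, a * b = b * a := by
  classical
  obtain ⟨T, hT⟩ := hfg.1
  let S : Finset D := (T ×ˢ (Finset.univ : Finset (Fin n × Fin n))).image
      (fun p => (p.1 : Matrix (Fin n) (Fin n) D) p.2.1 p.2.2) ∪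
    (T ×ˢ (Finset.univ : Finset (Fin n × Fin n))).image
      (fun p => ((p.1⁻¹ : (Matrix (Fin n) (Fin n) D)ˣ) : Matrix (Fin n) (Fin n) D) p.2.1 p.2.2)
  let R : Subalgebra ℤ D := Algebra.adjoin ℤ (S : Set D)
  have key : ∀ g : (Matrix (Fin n) (Fin n) D)ˣ,
      (∀ i j, (g : Matrix (Fin n) (Fin n) D) i j ∈ R) ∧
      (∀ i j, ((g⁻¹ : (Matrix (Fin n) (Fin n) D)ˣ) : Matrix (Fin n) (Fin n) D) i j ∈ R) := by
    intro g
    have hg : g ∈ Subgroup.closure (T : Set (Matrix (Fin n) (Fin n) D)ˣ) := by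
      rw [hT]; trivial
    induction hg using Subgroup.closure_induction with
    | mem x hx =>
      refine ⟨fun i j => Algebra.subset_adjoin ?_, fun i j => Algebra.subset_adjoin ?_⟩
      · refine Finset.mem_coe.2 (Finset.mem_union_left _ (Finset.mem_image.2 ⟨(x, (i, j)), ?_, rfl⟩))
        simpa using hx
      · refine Finset.mem_coe.2 (Finset.mem_union_right _ (Finset.mem_image.2 ⟨(x, (i, j)), ?_, rfl⟩))
        simpa using hx
    | one =>
      have h1 : ∀ i j, (1 : Matrix (Fin n) (Fin n) D) i j ∈ R := by
        intro i j
        rw [Matrix.one_apply]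
        split_ifs
        · exact one_mem R
        · exact zero_mem R
      refine ⟨fun i j => ?_, fun i j => ?_⟩
      · simpa using h1 i j
      · simpa using h1 i j
    | mul x y _ _ hx hy =>
      refine ⟨fun i j => ?_, fun i j => ?_⟩
      · rw [Units.val_mul, Matrix.mul_apply]
        exact sum_mem fun k _ => mul_mem (hx.1 _ _) (hy.1 _ _)
      · rw [mul_inv_rev, Units.val_mul, Matrix.mul_apply]
        exact sum_mem fun k _ => mul_mem (hy.2 _ _) (hx.2 _ _)
    | inv x _ hx =>
      refine ⟨hx.2, ?_⟩
      rw [inv_inv]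
      exact hx.1
  have hR : R = ⊤ := by
    rw [eq_top_iff]
    intro a _
    by_cases ha : a = 0
    · rw [ha]; exact zero_mem R
    let g : (Matrix (Fin n) (Fin n) D)ˣ :=
      ⟨Matrix.diagonal fun _ => a, Matrix.diagonal fun _ => a⁻¹,
        by simp [Matrix.diagonal_mul_diagonal, ha], by simp [Matrix.diagonal_mul_diagonal, ha]⟩
    have := (key g).1 ⟨0, hn⟩ ⟨0, hn⟩
    simpa [g] using this
  have hK : ∀ x : D, x ∈ Subfield.closure (S : Set D) := by
    intro x
    have hx : x ∈ R := by rw [hR]; trivial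
    induction hx using Algebra.adjoin_induction with
    | mem x hx => exact Subfield.subset_closure hx
    | algebraMap r => simp
    | add x y _ _ hx hy => exact add_mem hx hy
    | mul x y _ _ hx hy => exact mul_mem hx hy
  have hftD : Algebra.FiniteType ℤ D := ⟨⟨S, hR⟩⟩
  let e : D →+* Subfield.closure (S : Set D) :=
    (RingHom.id D).codRestrict (Subfield.closure (S : Set D)) hK
  have hft : Algebra.FiniteType ℤ (Subfield.closure (S : Set D)) :=
    hftD.of_surjective e.toIntAlgHom (fun x => ⟨x, rfl⟩)
  intro a b
  have := aux_comm _ (hwlf S) hft ⟨a, hK a⟩ ⟨b, hK b⟩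
  exact congrArg Subtype.val this
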